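/- Let M ∈ ℝ^{N×N} be the Laplacian of a nonnegative weighted directed graph. The algebraic multiplicity m of the zero eigenvalue of M equals the minimum number of directed trees in a directed spanning forest of the graph (i.e., the minimum number of vertex-disjoint directed trees which together contain all nodes), and all nonzero eigenvalues of M have positive real parts. -/

import Mathlib

open Matrix

lemma aux_re {n : ℕ} (w : Fin n → Fin n → ℝ) (hw : ∀ l k, 0 ≤ w l k)
    (M : Matrix (Fin n) (Fin n) ℝ)
    (hMdiag : ∀ l, M l l = ∑ k ∈ Finset.univ.erase l, w l k)
    (hMoff : ∀ l k, l ≠ k → M l k = - w l k) :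
    ∀ μ ∈ spectrum ℂ (M.map Complex.ofReal), μ ≠ 0 → 0 < μ.re := by
  intro μ hμ h0
  rw [← Matrix.spectrum_toLin', ← Module.End.hasEigenvalue_iff_mem_spectrum] at hμ
  obtain ⟨k, hk⟩ := eigenvalue_mem_ball hμ
  have hR : ∑ j ∈ Finset.univ.erase k, ‖(M.map Complex.ofReal) k j‖ = M k k := by
    rw [hMdiag]
    apply Finset.sum_congr rfl
    intro j hj
    have hj' : k ≠ j := (Finset.ne_of_mem_erase hj).symm
    simp [hMoff k j hj', abs_of_nonneg (hw k j)]
  rw [hR, mem_closedBall_iff_norm] at hk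
  simp only [Matrix.map_apply] at hk
  have h1 : ‖μ - (M k k : ℂ)‖ ^ 2 ≤ (M k k)^2 := by gcongr
  rw [← Complex.normSq_eq_norm_sq, Complex.normSq_apply] at h1
  simp at h1
  have h2 : 0 < Complex.normSq μ := Complex.normSq_pos.2 h0
  rw [Complex.normSq_apply] at h2
  have h3 : 0 ≤ M k k := le_trans (norm_nonneg _) hk
  by_contra hc
  nlinarith

lemma aux_row {n : ℕ} {w : Fin n → Fin n → ℝ} 
    {M : Matrix (Fin n) (Fin n) ℝ}
    (hMdiag : ∀ l, M l l = ∑ k ∈ Finset.univ.erase l, w l k)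
    (hMoff : ∀ l k, l ≠ k → M l k = - w l k) (x : Fin n → ℝ) (l : Fin n) :
    (M *ᵥ x) l = ∑ k ∈ Finset.univ.erase l, w l k * (x l - x k) := by
  rw [Matrix.mulVec, dotProduct, ← Finset.add_sum_erase _ _ (Finset.mem_univ l), hMdiag,
    Finset.sum_mul, ← Finset.sum_add_distrib]
  apply Finset.sum_congr rfl
  intro j hj
  rw [hMoff l j (Finset.ne_of_mem_erase hj).symm]; ring

/-- contraction property of `1 - ε M` -/
lemma aux_contr {n : ℕ} {w : Fin n → Fin n → ℝ} (hw : ∀ l k, 0 ≤ w l k)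
    {M : Matrix (Fin n) (Fin n) ℝ}
    (hMdiag : ∀ l, M l l = ∑ k ∈ Finset.univ.erase l, w l k)
    (hMoff : ∀ l k, l ≠ k → M l k = - w l k) (ε : ℝ) (hε : 0 ≤ ε) (h1 : ∀ l, ε * M l l ≤ 1)
    (x : Fin n → ℝ) (C : ℝ) (hx : ∀ l, |x l| ≤ C) (l : Fin n) :
    |x l - ε * (M *ᵥ x) l| ≤ C := by
  have e : x l - ε * (M *ᵥ x) l = (1 - ε * M l l) * x l +
      ∑ k ∈ Finset.univ.erase l, ε * w l k * x k := by
    rw [aux_row hMdiag hMoff, hMdiag]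
    simp only [mul_sub, Finset.sum_sub_distrib, Finset.mul_sum, sub_mul, Finset.sum_mul]
    simp only [mul_assoc, one_mul]
    ring
  rw [e]
  calc _ ≤ |(1 - ε * M l l) * x l| + |∑ k ∈ Finset.univ.erase l, ε * w l k * x k| := abs_add_le _ _
    _ ≤ (1 - ε * M l l) * C + ∑ k ∈ Finset.univ.erase l, ε * w l k * C := by
        gcongr
        · rw [abs_mul, abs_of_nonneg (by linarith [h1 l])]
          exact mul_le_mul_of_nonneg_left (hx l) (by linarith [h1 l])
        · refine (Finset.abs_sum_le_sum_abs _ _).trans (Finset.sum_le_sum fun k _ => ?_)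
          have := mul_nonneg hε (hw l k)
          rw [abs_mul, abs_of_nonneg this]
          exact mul_le_mul_of_nonneg_left (hx k) this
    _ = C := by
        rw [← Finset.sum_mul, ← Finset.mul_sum, ← hMdiag]; ring

lemma aux_semisimple {n : ℕ} {w : Fin n → Fin n → ℝ} (hw : ∀ l k, 0 ≤ w l k)
    {M : Matrix (Fin n) (Fin n) ℝ}
    (hMdiag : ∀ l, M l l = ∑ k ∈ Finset.univ.erase l, w l k)
    (hMoff : ∀ l k, l ≠ k → M l k = - w l k) (x : Fin n → ℝ) (h : M *ᵥ (M *ᵥ x) = 0) :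
    M *ᵥ x = 0 := by
  have hd : ∀ l, 0 ≤ M l l := fun l => by
    rw [hMdiag]; exact Finset.sum_nonneg fun k _ => hw l k
  obtain ⟨ε, hε, h1⟩ : ∃ ε : ℝ, 0 < ε ∧ ∀ l, ε * M l l ≤ 1 := by
    have hs : 0 ≤ ∑ l, M l l := Finset.sum_nonneg fun l _ => hd l
    refine ⟨(1 + ∑ l, M l l)⁻¹, by positivity, fun l => ?_⟩
    have := Finset.single_le_sum (f := fun l => M l l) (fun l _ => hd l) (Finset.mem_univ l)
    rw [inv_mul_le_iff₀ (by positivity)]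
    linarith
  obtain ⟨C, hC⟩ : ∃ C, ∀ l, |x l| ≤ C :=
    ⟨∑ l, |x l|, fun l => Finset.single_le_sum (f := fun l => |x l|) (fun l _ => abs_nonneg _)
      (Finset.mem_univ l)⟩
  have key : ∀ N : ℕ, ∀ l, |x l - N * ε * (M *ᵥ x) l| ≤ C := by
    intro N
    induction N with
    | zero => simpa using hC
    | succ N ih =>
      intro l
      have := aux_contr hw hMdiag hMoff ε hε.le h1 (x - ((N:ℝ) * ε) • (M *ᵥ x)) C
        (by simpa using ih) l
      rw [Matrix.mulVec_sub, Matrix.mulVec_smul, h] at this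
      simp at this
      convert this using 2
      push_cast; ring
  ext l
  by_contra hne
  have hp : 0 < ε * |(M *ᵥ x) l| := mul_pos hε (abs_pos.2 hne)
  obtain ⟨N, hN⟩ := exists_nat_gt (2 * C / (ε * |(M *ᵥ x) l|))
  rw [div_lt_iff₀ hp] at hN
  have a := key N l
  have b := hC l
  have c : |(N:ℝ) * ε * (M *ᵥ x) l| = N * (ε * |(M *ᵥ x) l|) := by
    rw [abs_mul, abs_mul, abs_of_pos hε, Nat.abs_cast]; ring
  have d := abs_sub_abs_le_abs_sub ((N:ℝ) * ε * (M *ᵥ x) l) (x l)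
  rw [abs_sub_comm] at d
  linarith

/-- maximum principle -/
lemma aux_max {n : ℕ} {w : Fin n → Fin n → ℝ} (hw : ∀ l k, 0 ≤ w l k)
    {M : Matrix (Fin n) (Fin n) ℝ}
    (hMdiag : ∀ l, M l l = ∑ k ∈ Finset.univ.erase l, w l k)
    (hMoff : ∀ l k, l ≠ k → M l k = - w l k) (x : Fin n → ℝ) (h : M *ᵥ x = 0)
    (R : Set (Fin n)) (hR : ∀ v, ∃ r ∈ R, Relation.ReflTransGen (fun a b => a ≠ b ∧ 0 < w b a) r v)
    (hx : ∀ r ∈ R, x r = 0) (v : Fin n) : x v ≤ 0 := by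
  obtain ⟨u, -, hu⟩ := Finset.exists_max_image Finset.univ x ⟨v, Finset.mem_univ v⟩
  obtain ⟨r, hr, hru⟩ := hR u
  suffices hs : x r = x u by rw [← hx r hr, hs]; exact hu v (Finset.mem_univ v)
  clear hr
  induction hru using Relation.ReflTransGen.head_induction_on with
  | refl => rfl
  | @head a c hab _ ih =>
    have h0 := congrFun h c
    rw [aux_row hMdiag hMoff, Pi.zero_apply, Finset.sum_eq_zero_iff_of_nonneg] at h0
    · have h1 := h0 a (Finset.mem_erase.2 ⟨hab.1, Finset.mem_univ a⟩)
      rcases mul_eq_zero.1 h1 with h2 | h2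
      · exact absurd h2 hab.2.ne'
      · linarith
    · intro k _
      refine mul_nonneg (hw c k) ?_
      rw [ih]
      linarith [hu k (Finset.mem_univ k)]

lemma aux_left {n : ℕ} {w : Fin n → Fin n → ℝ} 
    {M : Matrix (Fin n) (Fin n) ℝ}
    (hMdiag : ∀ l, M l l = ∑ k ∈ Finset.univ.erase l, w l k)
    (hMoff : ∀ l k, l ≠ k → M l k = - w l k) (S : Set (Fin n)) (hS : S.Nonempty)
    (hcl : ∀ l ∈ S, ∀ k ∉ S, M l k = 0) :
    ∃ y : Fin n → ℝ, y ≠ 0 ∧ (∀ k ∉ S, y k = 0) ∧ y ᵥ* M = 0 := by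
  classical
  let B : Matrix (Fin n) (Fin n) ℝ := fun l k => if l ∈ S then M l k else (1 : Matrix _ _ ℝ) l k
  let o : Fin n → ℝ := fun k => if k ∈ S then 1 else 0
  have ho : o ≠ 0 := by
    obtain ⟨s, hs⟩ := hS
    intro h; have := congrFun h s; simp [o, hs] at this
  have hB : B *ᵥ o = 0 := by
    ext l
    by_cases hl : l ∈ S
    · have h1 : (B *ᵥ o) l = (M *ᵥ (fun _ => 1)) l := by
        simp only [Matrix.mulVec, dotProduct, B, o, hl, if_true]
        refine Finset.sum_congr rfl fun k _ => ?_
        by_cases hk : k ∈ S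
        · simp [hk]
        · simp [hk, hcl l hl k hk]
      rw [h1, aux_row hMdiag hMoff]; simp
    · have h1 : (B *ᵥ o) l = ((1 : Matrix _ _ ℝ) *ᵥ o) l := by
        simp only [Matrix.mulVec, dotProduct, B, hl, if_false]
      rw [h1]; simp [o, hl]
  have hdet : B.det = 0 := Matrix.exists_mulVec_eq_zero_iff.1 ⟨o, ho, hB⟩
  obtain ⟨y, hy, hyB⟩ := Matrix.exists_vecMul_eq_zero_iff.2 hdet
  have hsupp : ∀ k ∉ S, y k = 0 := by
    intro k hk
    have h1 : (y ᵥ* B) k = (y ᵥ* (1 : Matrix _ _ ℝ)) k := by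
      simp only [Matrix.vecMul, dotProduct, B]
      refine Finset.sum_congr rfl fun l _ => ?_
      by_cases hl : l ∈ S
      · have : l ≠ k := fun h => hk (h ▸ hl)
        simp [hl, hcl l hl k hk, this]
      · simp [hl]
    rw [hyB] at h1
    simpa using h1.symm
  refine ⟨y, hy, hsupp, ?_⟩
  rw [← hyB]
  ext k
  simp only [Matrix.vecMul, dotProduct, B]
  refine Finset.sum_congr rfl fun l _ => ?_
  by_cases hl : l ∈ S
  · simp [hl]
  · simp [hsupp l hl]

lemma aux_mult {n : ℕ} {w : Fin n → Fin n → ℝ} (hw : ∀ l k, 0 ≤ w l k)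
    {M : Matrix (Fin n) (Fin n) ℝ}
    (hMdiag : ∀ l, M l l = ∑ k ∈ Finset.univ.erase l, w l k)
    (hMoff : ∀ l k, l ≠ k → M l k = - w l k) :
    M.charpoly.rootMultiplicity 0 = Module.finrank ℝ (LinearMap.ker M.mulVecLin) := by
  rw [← Matrix.charpoly_mulVecLin, ← LinearMap.finrank_maxGenEigenspace_eq]
  have : Module.End.maxGenEigenspace M.mulVecLin 0 = LinearMap.ker M.mulVecLin := by
    apply le_antisymm
    · intro x hx
      rw [Module.End.mem_maxGenEigenspace] at hx
      obtain ⟨k, hk⟩ := hx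
      rw [zero_smul, sub_zero] at hk
      have key : ∀ k : ℕ, ∀ x, (M.mulVecLin ^ (k+1)) x = 0 → M *ᵥ x = 0 := by
        intro k
        induction k with
        | zero => intro x hx; simpa using hx
        | succ k ih =>
          intro x hx
          rw [pow_succ] at hx
          exact aux_semisimple hw hMdiag hMoff x (ih (M *ᵥ x) hx)
      have := key k x (by rw [pow_succ', Module.End.mul_apply, hk, map_zero])
      simpa using this
    · intro x hx
      rw [Module.End.mem_maxGenEigenspace]
      exact ⟨1, by simpa using hx⟩
  rw [this]

lemma aux_le {n : ℕ} {w : Fin n → Fin n → ℝ} (hw : ∀ l k, 0 ≤ w l k)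
    {M : Matrix (Fin n) (Fin n) ℝ}
    (hMdiag : ∀ l, M l l = ∑ k ∈ Finset.univ.erase l, w l k)
    (hMoff : ∀ l k, l ≠ k → M l k = - w l k) (m : ℕ) (r : Fin m → Fin n)
    (hr : ∀ v, ∃ t, Relation.ReflTransGen (fun a b => a ≠ b ∧ 0 < w b a) (r t) v) :
    Module.finrank ℝ (LinearMap.ker M.mulVecLin) ≤ m := by
  let f : LinearMap.ker M.mulVecLin →ₗ[ℝ] (Fin m → ℝ) :=
    (LinearMap.funLeft ℝ ℝ r).comp (Submodule.subtype _)
  have hf : Function.Injective f := by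
    rw [← LinearMap.ker_eq_bot, LinearMap.ker_eq_bot']
    rintro ⟨x, hx⟩ hfx
    have hx' : M *ᵥ x = 0 := by simpa using hx
    have h0 : ∀ t, x (r t) = 0 := fun t => congrFun hfx t
    have hR : ∀ v, ∃ a ∈ Set.range r,
        Relation.ReflTransGen (fun a b => a ≠ b ∧ 0 < w b a) a v := fun v => by
      obtain ⟨t, ht⟩ := hr v
      exact ⟨r t, ⟨t, rfl⟩, ht⟩
    have h1 := aux_max hw hMdiag hMoff x hx' (Set.range r) hR (by rintro _ ⟨t, rfl⟩; exact h0 t)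
    have h2 := aux_max hw hMdiag hMoff (-x) (by rw [Matrix.mulVec_neg, hx', neg_zero])
      (Set.range r) hR (by rintro _ ⟨t, rfl⟩; simp [h0 t])
    ext v
    have h3 := h2 v
    simp only [Pi.neg_apply] at h3
    show x v = 0
    linarith [h1 v]
  simpa using LinearMap.finrank_le_finrank_of_injective hf

lemma aux_ker {n : ℕ} (M : Matrix (Fin n) (Fin n) ℝ) :
    Module.finrank ℝ (LinearMap.ker Mᵀ.mulVecLin) =
      Module.finrank ℝ (LinearMap.ker M.mulVecLin) := by
  have h1 := LinearMap.finrank_range_add_finrank_ker M.mulVecLin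
  have h2 := LinearMap.finrank_range_add_finrank_ker Mᵀ.mulVecLin
  have h3 := Matrix.rank_transpose M
  unfold Matrix.rank at h3
  omega

/-- disjoint closed sets give a lower bound on the dimension of the kernel -/
lemma aux_ge {n : ℕ} {w : Fin n → Fin n → ℝ}
    {M : Matrix (Fin n) (Fin n) ℝ}
    (hMdiag : ∀ l, M l l = ∑ k ∈ Finset.univ.erase l, w l k)
    (hMoff : ∀ l k, l ≠ k → M l k = - w l k) (K : Type) [Fintype K] (S : K → Set (Fin n))
    (hS : ∀ i, (S i).Nonempty) (hcl : ∀ i, ∀ l ∈ S i, ∀ k ∉ S i, M l k = 0)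
    (hd : ∀ i j v, v ∈ S i → v ∈ S j → i = j) :
    Fintype.card K ≤ Module.finrank ℝ (LinearMap.ker M.mulVecLin) := by
  classical
  choose y hy hys hyM using fun i => aux_left hMdiag hMoff (S i) (hS i) (hcl i)
  rw [← aux_ker]
  let z : K → LinearMap.ker Mᵀ.mulVecLin := fun i => ⟨y i, by
    simpa [Matrix.mulVec_transpose] using hyM i⟩
  have hz : LinearIndependent ℝ z := by
    rw [Fintype.linearIndependent_iff]
    intro g hg i
    obtain ⟨v, hv⟩ := Function.ne_iff.1 (hy i)
    have h1 := congrArg (fun q : LinearMap.ker Mᵀ.mulVecLin => (q : Fin n → ℝ) v) hg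
    simp [z] at h1
    rw [Finset.sum_eq_single i] at h1
    · exact (mul_eq_zero.1 h1).resolve_right hv
    · intro j _ hj
      rw [hys j v, mul_zero]
      intro hvj
      refine hj (hd j i v hvj ?_)
      by_contra hvi
      exact hv (hys i v hvi)
    · simp
  exact hz.fintype_card_le_finrank

/-- For the Laplacian `M` of a nonnegative weighted digraph on `Nn` nodes
(edge `k → l` has weight `w l k`), the algebraic multiplicity of the zero eigenvalue
equals the minimum number `m` of directed trees in a directed spanning forest
(vertex-disjoint directed rooted trees covering all nodes; a class of nodes `S` is
spanned by a directed tree of the graph iff some root in `S` reaches every node of `S`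
via edges of the graph joining nodes of `S`), and all nonzero eigenvalues of `M` have
positive real parts. -/
theorem stmt2 (Nn : ℕ) (w : Fin Nn → Fin Nn → ℝ) (hw : ∀ l k, 0 ≤ w l k)
    (M : Matrix (Fin Nn) (Fin Nn) ℝ)
    (hMdiag : ∀ l, M l l = ∑ k ∈ Finset.univ.erase l, w l k)
    (hMoff : ∀ l k, l ≠ k → M l k = - w l k)
    (m : ℕ)
    (hm : IsLeast {m' : ℕ | ∃ c : Fin Nn → Fin m', ∀ t : Fin m',
        ∃ r, c r = t ∧ ∀ v, c v = t →
          Relation.ReflTransGen (fun a b => c a = t ∧ c b = t ∧ a ≠ b ∧ 0 < w b a) r v} m) :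
    M.charpoly.rootMultiplicity 0 = m ∧
    ∀ μ ∈ spectrum ℂ (M.map Complex.ofReal), μ ≠ 0 → 0 < μ.re := by
  classical
  refine ⟨?_, aux_re w hw M hMdiag hMoff⟩
  rw [aux_mult hw hMdiag hMoff]
  apply le_antisymm
  · obtain ⟨c, hc⟩ := hm.1
    choose r hr hrv using hc
    exact aux_le hw hMdiag hMoff m r fun v =>
      ⟨c v, Relation.ReflTransGen.mono (fun a b h => h.2.2) _ _ (hrv (c v) v rfl)⟩
  let E : Fin Nn → Fin Nn → Prop := fun a b => a ≠ b ∧ 0 < w b a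
  let T : Fin Nn → Fin Nn → Prop := Relation.ReflTransGen E
  have Trefl : ∀ a, T a a := fun a => Relation.ReflTransGen.refl
  have Ttr : ∀ {a b c}, T a b → T b c → T a c := fun h1 h2 => Relation.ReflTransGen.trans h1 h2
  let K := {u : Fin Nn // ∀ a, T a u → T u a ∧ u ≤ a}
  have hK : ∀ v, ∃ k : K, T k.1 v := by
    intro v
    let A : Fin Nn → Finset (Fin Nn) := fun u => Finset.univ.filter fun a => T a u
    have hA : ∀ a u, a ∈ A u ↔ T a u := by simp [A]
    obtain ⟨s, hs, hmin⟩ := Finset.exists_min_image (A v) (fun a => (A a).card)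
      ⟨v, (hA v v).2 (Trefl v)⟩
    rw [hA] at hs
    have hsrc : ∀ a, T a s → T s a := by
      intro a ha
      have hsub : A a ⊆ A s := fun b hb => (hA _ _).2 (Ttr ((hA _ _).1 hb) ha)
      have := Finset.eq_of_subset_of_card_le hsub (hmin a ((hA _ _).2 (Ttr ha hs)))
      exact (hA _ _).1 (this ▸ (hA s s).2 (Trefl s))
    obtain ⟨u, hu, humin⟩ := Finset.exists_min_image (A s) id ⟨s, (hA s s).2 (Trefl s)⟩
    rw [hA] at hu
    refine ⟨⟨u, fun a ha => ⟨Ttr hu (hsrc a (Ttr ha hu)), humin a ((hA _ _).2 (Ttr ha hu))⟩⟩,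
      Ttr hu hs⟩
  have hKK : ∀ i j : K, T i.1 j.1 → i = j := by
    intro i j h
    have h1 := j.2 _ h
    have h2 := i.2 _ h1.1
    exact Subtype.ext (le_antisymm h2.2 h1.2)
  refine le_trans (b := Fintype.card K) ?_ ?_
  · apply hm.2
    have hex : ∀ v, ∃ k : K, T k.1 v ∧ ∀ k' : K, T k'.1 v → k ≤ k' := by
      intro v
      obtain ⟨k0, hk0⟩ := hK v
      obtain ⟨k, hk, hmin⟩ := Finset.exists_min_image
        (Finset.univ.filter fun k : K => T k.1 v) id ⟨k0, by simpa using hk0⟩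
      exact ⟨k, by simpa using hk, fun k' hk' => hmin k' (by simpa using hk')⟩
    choose c hc hcmin using hex
    let e := Fintype.equivFin K
    refine ⟨fun v => e (c v), fun t => ⟨(e.symm t).1, ?_, ?_⟩⟩
    · have := hKK _ _ (hc (e.symm t).1)
      show e (c (e.symm t).1) = t
      rw [this]; simp
    · intro v hv
      have hv' : e.symm t = c v := by rw [← hv]; simp
      obtain ⟨k, rfl⟩ := e.surjective t
      rw [Equiv.symm_apply_apply] at hv' ⊢
      have hkv : T k.1 v := hv' ▸ hc v
      have key : ∀ u, T k.1 u → T u v → c u = k := by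
        intro u h1 h2
        refine le_antisymm (hcmin u k h1) ?_
        rw [hv']
        exact hcmin v _ (Ttr (hc u) h2)
      have main : ∀ u, T k.1 u → T u v → Relation.ReflTransGen (fun a b => e (c a) = e k ∧
          e (c b) = e k ∧ a ≠ b ∧ 0 < w b a) k.1 u := by
        intro u hu
        induction hu with
        | refl => intro _; exact Relation.ReflTransGen.refl
        | @tail b d hb hbd ih =>
          intro hd
          have hbv : T b v := Ttr (Relation.ReflTransGen.single hbd) hd
          refine (ih hbv).tail ⟨?_, ?_, hbd⟩
          · rw [key b hb hbv]
          · rw [key d (hb.tail hbd) hd]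
      exact main v hkv (Trefl v)
  · refine aux_ge hMdiag hMoff K (fun k => {a | T a k.1}) (fun k => ⟨k.1, Trefl _⟩) ?_ ?_
    · intro i l hl k hk
      have hne : l ≠ k := by rintro rfl; exact hk hl
      rw [hMoff l k hne]
      by_contra h
      have hpos : 0 < w l k := lt_of_le_of_ne (hw l k) fun h' => h (by rw [← h', neg_zero])
      exact hk (Ttr (Relation.ReflTransGen.single ⟨hne.symm, hpos⟩) hl)
    · intro i j v hi hj
      exact hKK i j (Ttr (i.2 v hi).1 hj)
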